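/- Let α > 0, λ > 0, β > 0, and set m := α/2. Define the weighted Moreau envelope e(θ) := inf_{ϑ ∈ ℝ} { α|ϑ| + (m/(2λ))·(θ − ϑ)² } and let φ_β(θ) := θ·arsinh(θ/β) − √(θ² + β²) be the hyperbolic entropy. Then with β_g := α·√(4λ² + β²)/(2λ), the function θ ↦ β_g·φ_β(θ) − e(θ) is convex on ℝ; that is, e is β_g-smooth relative to φ_β. -/

import Mathlib

/-- The hyperbolic entropy with parameter `β > 0`. -/
noncomputable def hypEnt (β θ : ℝ) : ℝ :=
  θ * Real.arsinh (θ / β) - Real.sqrt (θ ^ 2 + β ^ 2)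

/-- The weighted Moreau envelope of `α|·|` with weight `m` and parameter `λ`. -/
noncomputable def wMoreau (α m lam θ : ℝ) : ℝ :=
  ⨅ ϑ : ℝ, (α * |ϑ| + m / (2 * lam) * (θ - ϑ) ^ 2)

/-!
With threshold `τ = αλ/m`, the proximal point of `θ` is the soft thresholding `θ - P θ`, where `P`
is the projection onto `[-τ, τ]`, so the envelope has derivative `(m/λ) P`. The hyperbolic entropy
has derivative `arsinh(θ/β)`, whose slope is at least `1/√(τ² + β²)` on `[-τ, τ]`. Hence
`√(τ² + β²) arsinh(θ/β) - P θ` is monotone: on `[-τ, τ]` by the slope bound, and outside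
because `arsinh` increases while `P` is constant.
-/

open Set Filter Topology Asymptotics

section MoreauEnvelope

variable {f prox : ℝ → ℝ} {c : ℝ}

lemma abs_envelope_remainder_le
    (hprox : ∀ θ ϑ, f (prox θ) + c * (θ - prox θ) ^ 2 ≤ f ϑ + c * (θ - ϑ) ^ 2) (x y : ℝ) :
    |f (prox y) + c * (y - prox y) ^ 2 - (f (prox x) + c * (x - prox x) ^ 2) -
        (y - x) * (2 * c * (x - prox x))| ≤
      |c| * |(y - x) * (|y - x| + 2 * |prox y - prox x|)| := by
  set R := f (prox y) + c * (y - prox y) ^ 2 - (f (prox x) + c * (x - prox x) ^ 2) -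
    (y - x) * (2 * c * (x - prox x))
  -- The minimizer for either of `x` and `y` is a competitor for the other.
  have hupper : R ≤ c * (y - x) ^ 2 := by linarith [hprox y (prox x)]
  have hlower : c * (y - x) ^ 2 - 2 * (c * ((y - x) * (prox y - prox x))) ≤ R := by
    linarith [hprox x (prox y)]
  have hsq : |c * (y - x) ^ 2| = |c| * (|y - x| * |y - x|) := by rw [abs_mul, abs_pow, sq]
  have hcross : |c * ((y - x) * (prox y - prox x))| = |c| * (|y - x| * |prox y - prox x|) := by
    rw [abs_mul, abs_mul]
  have hnonneg : 0 ≤ |c| * (|y - x| * |prox y - prox x|) := by positivity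
  rw [abs_mul (y - x), abs_of_nonneg (by positivity : 0 ≤ |y - x| + 2 * |prox y - prox x|), abs_le]
  constructor
  · linarith [neg_abs_le (c * (y - x) ^ 2), le_abs_self (c * ((y - x) * (prox y - prox x)))]
  · linarith [le_abs_self (c * (y - x) ^ 2)]

lemma hasDerivAt_iInf_add_mul_sub_sq {x : ℝ} (hcont : ContinuousAt prox x)
    (hprox : ∀ θ ϑ, f (prox θ) + c * (θ - prox θ) ^ 2 ≤ f ϑ + c * (θ - ϑ) ^ 2) :
    HasDerivAt (fun θ => ⨅ ϑ, (f ϑ + c * (θ - ϑ) ^ 2)) (2 * c * (x - prox x)) x := by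
  have hmin (θ : ℝ) : ⨅ ϑ, (f ϑ + c * (θ - ϑ) ^ 2) = f (prox θ) + c * (θ - prox θ) ^ 2 :=
    IsLeast.csInf_eq ⟨mem_range_self _, forall_mem_range.2 (hprox θ)⟩
  have hzero : Tendsto (fun y => |y - x| + 2 * |prox y - prox x|) (𝓝 x) (𝓝 0) := by
    have : ContinuousAt (fun y => |y - x| + 2 * |prox y - prox x|) x := by fun_prop
    simpa using this.tendsto
  have hsmall : (fun y => (y - x) * (|y - x| + 2 * |prox y - prox x|)) =o[𝓝 x] fun y => y - x := by
    simpa using (isBigO_refl (fun y => y - x) (𝓝 x)).mul_isLittleO ((isLittleO_one_iff ℝ).2 hzero)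
  simp only [hmin]
  rw [hasDerivAt_iff_isLittleO]
  exact (IsBigO.of_bound |c| (Eventually.of_forall fun y =>
    abs_envelope_remainder_le hprox x y)).trans_isLittleO hsmall

end MoreauEnvelope

lemma monotone_sub_comp_projIcc {ι G : Type*} [LinearOrder ι] [AddCommGroup G] [PartialOrder G]
    [IsOrderedAddMonoid G] {a b : ι} (h : a ≤ b) {f : ι → G} (hf : Monotone f) :
    Monotone fun x => f x - f (projIcc a b h x) := by
  have hsplit (x : ι) : f x - f (projIcc a b h x) = (f (min a x) - f a) + (f (max b x) - f b) := by
    rcases le_total x a with hxa | hax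
    · simp [projIcc_of_le_left h hxa, hxa, hxa.trans h]
    rcases le_total x b with hxb | hbx
    · simp [projIcc_of_mem h ⟨hax, hxb⟩, hax, hxb]
    · simp [projIcc_of_right_le h hbx, hax, hbx]
  simp only [hsplit]
  exact fun x y hxy => add_le_add
    (sub_le_sub_right (hf (min_le_min_left a hxy)) _)
    (sub_le_sub_right (hf (max_le_max_left b hxy)) _)

lemma monotone_sub_projIcc {G : Type*} [AddCommGroup G] [LinearOrder G]
    [IsOrderedAddMonoid G] {a b : G} (h : a ≤ b) {g : G → G} (hg : Monotone g)
    (hgI : MonotoneOn (fun x => g x - x) (Icc a b)) :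
    Monotone fun x => g x - projIcc a b h x := by
  have hproj : Monotone fun x => g (projIcc a b h x) - projIcc a b h x := fun x y hxy =>
    hgI (projIcc a b h x).2 (projIcc a b h y).2 (monotone_projIcc h hxy)
  simpa only [Pi.add_def, sub_add_sub_cancel] using (monotone_sub_comp_projIcc h hg).add hproj

lemma projIcc_mul_sub_eq_mul_abs {τ : ℝ} (h : -τ ≤ τ) (θ : ℝ) :
    projIcc (-τ) τ h θ * (θ - projIcc (-τ) τ h θ) = τ * |θ - projIcc (-τ) τ h θ| := by
  rcases le_total θ (-τ) with hθ | hθ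
  · rw [projIcc_of_le_left h hθ, abs_of_nonpos (sub_nonpos.2 hθ)]
    ring
  rcases le_total θ τ with hθ' | hθ'
  · simp [projIcc_of_mem h ⟨hθ, hθ'⟩]
  · rw [projIcc_of_right_le h hθ', abs_of_nonneg (sub_nonneg.2 hθ')]

/-- The soft thresholding operator: the proximal map of `τ * |·|`, which subtracts from `θ` its
projection onto `[-τ, τ]`. -/
noncomputable def softThreshold {τ : ℝ} (h : -τ ≤ τ) (θ : ℝ) : ℝ :=
  θ - projIcc (-τ) τ h θ

lemma mul_abs_softThreshold_add_sq_le {τ : ℝ} (h : -τ ≤ τ) (θ ϑ : ℝ) :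
    τ * |softThreshold h θ| + (θ - softThreshold h θ) ^ 2 / 2 ≤ τ * |ϑ| + (θ - ϑ) ^ 2 / 2 := by
  rw [softThreshold, ← projIcc_mul_sub_eq_mul_abs]
  set p : ℝ := (projIcc (-τ) τ h θ : ℝ)
  have hp : |p| ≤ τ := abs_le.2 (projIcc (-τ) τ h θ).2
  -- `p` is a subgradient of `τ * |·|` at the soft thresholding of `θ`.
  have hsub : p * ϑ ≤ τ * |ϑ| := by
    calc p * ϑ ≤ |p| * |ϑ| := by rw [← abs_mul]; exact le_abs_self _
      _ ≤ τ * |ϑ| := by gcongr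
  nlinarith [sq_nonneg (θ - ϑ - p)]

lemma hasDerivAt_wMoreau {α m lam : ℝ} (hm : 0 < m) (hlam : 0 < lam)
    (h : -(α * lam / m) ≤ α * lam / m) (θ : ℝ) :
    HasDerivAt (wMoreau α m lam)
      (m / lam * projIcc (-(α * lam / m)) (α * lam / m) h θ) θ := by
  have hprox (x ϑ : ℝ) := mul_le_mul_of_nonneg_left (mul_abs_softThreshold_add_sq_le h x ϑ)
    (div_pos hm hlam).le
  have hscale (t s : ℝ) : m / lam * (α * lam / m * t + s / 2) = α * t + m / (2 * lam) * s := by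
    field_simp
  simp only [hscale] at hprox
  have hcont : Continuous (softThreshold h) := by
    unfold softThreshold
    fun_prop
  refine (hasDerivAt_iInf_add_mul_sub_sq (f := fun ϑ => α * |ϑ|) hcont.continuousAt
    hprox).congr_deriv ?_
  rw [softThreshold, sub_sub_cancel]
  field_simp

section HyperbolicEntropy

variable {β : ℝ}

lemma hasDerivAt_arsinh_div (hβ : 0 < β) (θ : ℝ) :
    HasDerivAt (fun t => Real.arsinh (t / β)) (√(θ ^ 2 + β ^ 2))⁻¹ θ := by
  refine ((hasDerivAt_id θ).div_const β).arsinh.congr_deriv ?_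
  have hsqrt : √(θ ^ 2 + β ^ 2) = √(1 + (θ / β) ^ 2) * β := by
    rw [← Real.sqrt_sq hβ.le, ← Real.sqrt_mul (by positivity), Real.sqrt_sq hβ.le]
    congr 1
    field_simp
    ring
  rw [hsqrt, smul_eq_mul, mul_inv, one_div, id]

lemma hasDerivAt_hypEnt (hβ : 0 < β) (θ : ℝ) :
    HasDerivAt (hypEnt β) (Real.arsinh (θ / β)) θ := by
  have hpos : 0 < θ ^ 2 + β ^ 2 := by positivity
  have hsqrt := ((hasDerivAt_pow 2 θ).add_const (β ^ 2)).sqrt hpos.ne'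
  refine (((hasDerivAt_id θ).mul (hasDerivAt_arsinh_div hβ θ)).sub hsqrt).congr_deriv ?_
  simp only [id]
  field_simp
  ring

lemma monotoneOn_sqrt_mul_arsinh_div_sub_id (hβ : 0 < β) (τ : ℝ) :
    MonotoneOn (fun θ => √(τ ^ 2 + β ^ 2) * Real.arsinh (θ / β) - θ) (Icc (-τ) τ) := by
  have hderiv (θ : ℝ) :=
    ((hasDerivAt_arsinh_div hβ θ).const_mul √(τ ^ 2 + β ^ 2)).sub (hasDerivAt_id θ)
  refine monotoneOn_of_hasDerivWithinAt_nonneg (convex_Icc _ _)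
    (fun θ _ => (hderiv θ).continuousAt.continuousWithinAt)
    (fun θ _ => (hderiv θ).hasDerivWithinAt) fun θ hθ => ?_
  have hpos : 0 < √(θ ^ 2 + β ^ 2) := by positivity
  have hsq : θ ^ 2 ≤ τ ^ 2 := sq_le_sq' (interior_subset hθ).1 (interior_subset hθ).2
  rw [sub_nonneg, ← div_eq_mul_inv, one_le_div hpos]
  gcongr

end HyperbolicEntropy

theorem stmt18_general (α m lam β : ℝ) (hα : 0 ≤ α) (hm : 0 < m) (hlam : 0 < lam) (hβ : 0 < β) :
    ConvexOn ℝ univ fun θ : ℝ =>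
      m / lam * √((α * lam / m) ^ 2 + β ^ 2) * hypEnt β θ - wMoreau α m lam θ := by
  have hτ : -(α * lam / m) ≤ α * lam / m := neg_le_self (by positivity)
  have hderiv (θ : ℝ) : HasDerivAt
      (fun t => m / lam * √((α * lam / m) ^ 2 + β ^ 2) * hypEnt β t - wMoreau α m lam t)
      (m / lam * (√((α * lam / m) ^ 2 + β ^ 2) * Real.arsinh (θ / β) -
        projIcc (-(α * lam / m)) (α * lam / m) hτ θ)) θ :=
    (((hasDerivAt_hypEnt hβ θ).const_mul _).sub
      (hasDerivAt_wMoreau hm hlam hτ θ)).congr_deriv (by ring)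
  have harsinh : Monotone fun θ => √((α * lam / m) ^ 2 + β ^ 2) * Real.arsinh (θ / β) :=
    (Real.arsinh_strictMono.monotone.comp (monotone_div_right_of_nonneg hβ.le)).const_mul
      (Real.sqrt_nonneg _)
  have hmono := (monotone_sub_projIcc hτ harsinh
    (monotoneOn_sqrt_mul_arsinh_div_sub_id hβ _)).const_mul (div_pos hm hlam).le
  refine Monotone.convexOn_univ_of_deriv (fun θ => (hderiv θ).differentiableAt) ?_
  simpa only [funext fun θ => (hderiv θ).deriv] using hmono

/-- With `m = α/2` and `β_g = α·√(4λ² + β²)/(2λ)`, the weighted Moreau envelope of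
`α|·|` is `β_g`-smooth relative to the hyperbolic entropy `φ_β`:
`θ ↦ β_g·φ_β(θ) − e(θ)` is convex on `ℝ`. -/
theorem stmt18 (α lam β : ℝ) (hα : 0 < α) (hlam : 0 < lam) (hβ : 0 < β) :
    ConvexOn ℝ Set.univ
      (fun θ : ℝ =>
        α * Real.sqrt (4 * lam ^ 2 + β ^ 2) / (2 * lam) * hypEnt β θ -
          wMoreau α (α / 2) lam θ) := by
  have hτ : (α * lam / (α / 2)) ^ 2 = 4 * lam ^ 2 := by field_simp; norm_num
  convert stmt18_general α (α / 2) lam β hα.le (half_pos hα) hlam hβ using 4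
  rw [hτ]; ring
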